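/- The Goemans–Williamson rounding guarantee: let W be a symmetric matrix with nonnegative entries, X a positive semidefinite matrix with X_ii = 1 for all i, and write X_ij = uᵢᵀuⱼ with unit vectors uᵢ. Then for z ∼ N(0,I) and x = sign(Xz-components), E[(1/2)Σ_{ij} w_{ij}(1 − xᵢxⱼ)] ≥ α·(1/2)Σ_{ij} w_{ij}(1 − X_{ij}), where α = (2/π)·min_{t∈[−1,1]} arccos(t)/(1−t) and xᵢ = sign(uᵢᵀz). -/

import Mathlib

/-!
A centered pair `(Y, Z)` of jointly Gaussian variables of unit variance with covariance `cos θ` has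
the law of `(x, x cos θ + y sin θ)` for a standard Gaussian `(x, y)` in the plane. In polar
coordinates `sign Y * sign Z` only depends on the angle `φ`, being the sign of
`cos φ * cos (φ - θ)`, which is negative for a proportion `θ / π` of the directions. Hence
`E[1 - sign Y * sign Z] = (2 / π) * arccos (cov Y Z)`, and the definition of the constant `α` bounds
this below by `α * (1 - cov Y Z)`. The guarantee is the weighted sum of these inequalities.
-/

open MeasureTheory ProbabilityTheory Set
open scoped Real NNReal

lemma real_sign_mul (a b : ℝ) : Real.sign (a * b) = Real.sign a * Real.sign b := by
  rcases lt_trichotomy a 0 with ha | rfl | ha <;> rcases lt_trichotomy b 0 with hb | rfl | hb <;>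
    simp [*, Real.sign_of_neg, Real.sign_of_pos, mul_pos_of_neg_of_neg, mul_neg_of_neg_of_pos,
      mul_neg_of_pos_of_neg]

lemma abs_real_sign_le_one (a : ℝ) : |Real.sign a| ≤ 1 := by
  rcases Real.sign_apply_eq a with h | h | h <;> simp [h]

@[fun_prop]
lemma measurable_real_sign : Measurable Real.sign :=
  Measurable.ite measurableSet_Iio measurable_const
    (Measurable.ite measurableSet_Ioi measurable_const measurable_const)

lemma intervalIntegrable_real_sign_comp {f : ℝ → ℝ} (hf : Measurable f) (a b : ℝ) :
    IntervalIntegrable (fun x ↦ Real.sign (f x)) volume a b :=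
  (intervalIntegrable_const (c := (1 : ℝ))).mono_fun
    (measurable_real_sign.comp hf).aestronglyMeasurable
    (.of_forall fun x ↦ by simpa using abs_real_sign_le_one (f x))

section Angle

variable {θ : ℝ}

lemma integral_sign_cos_mul_cos_sub_neg_pi_div_two_pi_div_two (h₀ : 0 ≤ θ) (hπ : θ ≤ π) :
    ∫ φ in (-(π / 2))..(π / 2), Real.sign (Real.cos φ * Real.cos (φ - θ)) = π - 2 * θ := by
  have hint (a b : ℝ) :
      IntervalIntegrable (fun φ ↦ Real.sign (Real.cos φ * Real.cos (φ - θ))) volume a b :=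
    intervalIntegrable_real_sign_comp (by fun_prop) a b
  have hcos {φ : ℝ} (h₁ : -(π / 2) < φ) (h₂ : φ < π / 2) : 0 < Real.cos φ :=
    Real.cos_pos_of_mem_Ioo ⟨h₁, h₂⟩
  have hneg : ∫ φ in (-(π / 2))..(θ - π / 2), Real.sign (Real.cos φ * Real.cos (φ - θ)) =
      ∫ _ in (-(π / 2))..(θ - π / 2), (-1 : ℝ) := by
    refine intervalIntegral.integral_congr_Ioo_of_le (by linarith) fun φ ⟨hφ₁, hφ₂⟩ ↦ ?_
    have hcos_sub : Real.cos (φ - θ) < 0 := by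
      rw [← Real.cos_neg, neg_sub]
      exact Real.cos_neg_of_pi_div_two_lt_of_lt (by linarith) (by linarith)
    exact Real.sign_of_neg (mul_neg_of_pos_of_neg (hcos hφ₁ (by linarith)) hcos_sub)
  have hpos : ∫ φ in (θ - π / 2)..(π / 2), Real.sign (Real.cos φ * Real.cos (φ - θ)) =
      ∫ _ in (θ - π / 2)..(π / 2), (1 : ℝ) := by
    refine intervalIntegral.integral_congr_Ioo_of_le (by linarith) fun φ ⟨hφ₁, hφ₂⟩ ↦ ?_
    exact Real.sign_of_pos
      (mul_pos (hcos (by linarith) hφ₂) (hcos (by linarith) (by linarith)))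
  rw [← intervalIntegral.integral_add_adjacent_intervals (hint _ (θ - π / 2)) (hint _ _), hneg,
    hpos, intervalIntegral.integral_const, intervalIntegral.integral_const]
  simp only [smul_eq_mul]
  ring

lemma integral_sign_cos_mul_cos_sub (h₀ : 0 ≤ θ) (hπ : θ ≤ π) :
    ∫ φ in (-π)..π, Real.sign (Real.cos φ * Real.cos (φ - θ)) = 2 * π - 4 * θ := by
  have hper : Function.Periodic (fun φ ↦ Real.sign (Real.cos φ * Real.cos (φ - θ))) π := fun φ ↦ by
    simp [add_sub_right_comm]
  have htwo := hper.intervalIntegral_add_zsmul_eq 2 (-π)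
    fun a b ↦ intervalIntegrable_real_sign_comp (by fun_prop) a b
  have hhalf := hper.intervalIntegral_add_eq (-π) (-(π / 2))
  have hend : -π + (2 : ℤ) • π = π := by
    rw [zsmul_eq_mul]
    push_cast
    ring
  rw [hend, hhalf, show -(π / 2) + π = π / 2 by ring,
    integral_sign_cos_mul_cos_sub_neg_pi_div_two_pi_div_two h₀ hπ] at htwo
  rw [htwo, zsmul_eq_mul]
  push_cast
  ring

end Angle

section PlanarGaussian

lemma gaussianPDFReal_mul_gaussianPDFReal_polar (v : ℝ≥0) (r φ : ℝ) :
    gaussianPDFReal 0 v (r * Real.cos φ) * gaussianPDFReal 0 v (r * Real.sin φ) =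
      (2 * π * v)⁻¹ * Real.exp (-(2 * v : ℝ)⁻¹ * r ^ 2) := by
  have hexponent : -(r * Real.cos φ - 0) ^ 2 / (2 * v) + -(r * Real.sin φ - 0) ^ 2 / (2 * v) =
      -(2 * v : ℝ)⁻¹ * r ^ 2 := by
    linear_combination -(r ^ 2 / (2 * v)) * Real.sin_sq_add_cos_sq φ
  rw [gaussianPDFReal, gaussianPDFReal, mul_mul_mul_comm, ← mul_inv,
    Real.mul_self_sqrt (by positivity), ← Real.exp_add, hexponent]

lemma integral_Ioi_mul_exp_neg_mul_sq {b : ℝ} (hb : 0 < b) :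
    ∫ r in Ioi (0 : ℝ), r * Real.exp (-b * r ^ 2) = (2 * b)⁻¹ := by
  have h := integral_rpow_mul_exp_neg_mul_rpow (p := 2) (q := 1) two_pos (by norm_num) hb
  rw [show -(1 + 1) / 2 = (-1 : ℝ) by norm_num, show (1 + 1) / 2 = (1 : ℝ) by norm_num] at h
  simpa [Real.rpow_neg_one, mul_comm] using h

lemma gaussianReal_prod_gaussianReal (m₁ m₂ : ℝ) {v₁ v₂ : ℝ≥0} (hv₁ : v₁ ≠ 0) (hv₂ : v₂ ≠ 0) :
    (gaussianReal m₁ v₁).prod (gaussianReal m₂ v₂) =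
      volume.withDensity fun p : ℝ × ℝ ↦ gaussianPDF m₁ v₁ p.1 * gaussianPDF m₂ v₂ p.2 := by
  rw [gaussianReal_of_var_ne_zero _ hv₁, gaussianReal_of_var_ne_zero _ hv₂,
    prod_withDensity (by fun_prop) (by fun_prop), Measure.volume_eq_prod]

variable {v : ℝ≥0}

lemma integral_prod_gaussianReal_of_forall_pos_smul {E : Type*} [NormedAddCommGroup E]
    [NormedSpace ℝ E] (hv : v ≠ 0) {f : ℝ × ℝ → E}
    (hf : ∀ r : ℝ, 0 < r → ∀ p, f (r • p) = f p) :
    ∫ p, f p ∂(gaussianReal 0 v).prod (gaussianReal 0 v) =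
      (2 * π)⁻¹ • ∫ φ in (-π)..π, f (Real.cos φ, Real.sin φ) := by
  have hpolar : ∀ p ∈ polarCoord.target,
      p.1 • ((gaussianPDF 0 v (polarCoord.symm p).1 *
        gaussianPDF 0 v (polarCoord.symm p).2).toReal • f (polarCoord.symm p)) =
      ((2 * π * v)⁻¹ * (p.1 * Real.exp (-(2 * v : ℝ)⁻¹ * p.1 ^ 2))) •
        f (Real.cos p.2, Real.sin p.2) := by
    rintro ⟨r, φ⟩ ⟨hr, -⟩
    have hf_polar : f (r * Real.cos φ, r * Real.sin φ) = f (Real.cos φ, Real.sin φ) :=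
      hf r hr (Real.cos φ, Real.sin φ)
    simp only [polarCoord_symm_apply, ENNReal.toReal_mul, toReal_gaussianPDF, hf_polar, smul_smul,
      gaussianPDFReal_mul_gaussianPDFReal_polar]
    ring_nf
  have hradial : ∫ r in Ioi (0 : ℝ), (2 * π * v)⁻¹ * (r * Real.exp (-(2 * v : ℝ)⁻¹ * r ^ 2)) =
      (2 * π)⁻¹ := by
    rw [integral_const_mul, integral_Ioi_mul_exp_neg_mul_sq (by positivity)]
    field_simp
  calc ∫ p, f p ∂(gaussianReal 0 v).prod (gaussianReal 0 v)
      = ∫ p : ℝ × ℝ, (gaussianPDF 0 v p.1 * gaussianPDF 0 v p.2).toReal • f p := by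
        rw [gaussianReal_prod_gaussianReal 0 0 hv hv]
        exact integral_withDensity_eq_integral_toReal_smul (by fun_prop)
          (.of_forall fun p ↦ ENNReal.mul_lt_top gaussianPDF_lt_top gaussianPDF_lt_top) f
    _ = ∫ p in Ioi (0 : ℝ) ×ˢ Ioo (-π) π,
          ((2 * π * v)⁻¹ * (p.1 * Real.exp (-(2 * v : ℝ)⁻¹ * p.1 ^ 2))) •
            f (Real.cos p.2, Real.sin p.2) := by
        rw [← integral_comp_polarCoord_symm]
        exact setIntegral_congr_fun polarCoord.open_target.measurableSet hpolar
    _ = (2 * π)⁻¹ • ∫ φ in (-π)..π, f (Real.cos φ, Real.sin φ) := by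
        rw [Measure.volume_eq_prod, ← Measure.prod_restrict, integral_prod_smul
            (fun r : ℝ ↦ (2 * π * v)⁻¹ * (r * Real.exp (-(2 * v : ℝ)⁻¹ * r ^ 2)))
            (fun φ : ℝ ↦ f (Real.cos φ, Real.sin φ)), hradial,
          intervalIntegral.integral_of_le (by linarith [Real.pi_pos]),
          integral_Ioc_eq_integral_Ioo]

lemma integral_sign_mul_sign_prod_gaussianReal (hv : v ≠ 0) {θ : ℝ} (h₀ : 0 ≤ θ) (hπ : θ ≤ π) :
    ∫ p, Real.sign p.1 * Real.sign (Real.cos θ * p.1 + Real.sin θ * p.2)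
      ∂(gaussianReal 0 v).prod (gaussianReal 0 v) = 1 - 2 / π * θ := by
  simp_rw [← real_sign_mul]
  have hhom (r : ℝ) (hr : 0 < r) (p : ℝ × ℝ) :
      Real.sign ((r • p).1 * (Real.cos θ * (r • p).1 + Real.sin θ * (r • p).2)) =
        Real.sign (p.1 * (Real.cos θ * p.1 + Real.sin θ * p.2)) := by
    rw [← one_mul (Real.sign (p.1 * _)), ← Real.sign_of_pos (mul_pos hr hr), ← real_sign_mul]
    simp only [Prod.smul_fst, Prod.smul_snd, smul_eq_mul]
    ring_nf
  have hcos (φ : ℝ) :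
      Real.cos θ * Real.cos φ + Real.sin θ * Real.sin φ = Real.cos (φ - θ) := by
    rw [Real.cos_sub]
    ring
  rw [integral_prod_gaussianReal_of_forall_pos_smul hv hhom]
  simp_rw [hcos]
  rw [integral_sign_cos_mul_cos_sub h₀ hπ, smul_eq_mul]
  field_simp
  ring

end PlanarGaussian

section GaussianPair

variable {Ω Ω' : Type*} {mΩ : MeasurableSpace Ω} {mΩ' : MeasurableSpace Ω'}
  {P : Measure Ω} {P' : Measure Ω'} {Y Z : Ω → ℝ} {Y' Z' : Ω' → ℝ}

lemma variance_const_mul_add_const_mul [IsFiniteMeasure P] (hY : MemLp Y 2 P) (hZ : MemLp Z 2 P)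
    (a b : ℝ) :
    Var[fun ω ↦ a * Y ω + b * Z ω; P] =
      a ^ 2 * Var[Y; P] + 2 * (a * b * cov[Y, Z; P]) + b ^ 2 * Var[Z; P] := by
  rw [variance_fun_add (hY.const_mul a) (hZ.const_mul b), variance_const_mul, variance_const_mul,
    covariance_const_mul_left, covariance_const_mul_right, mul_assoc a b]

lemma neg_one_le_covariance_of_variance_eq_one [IsFiniteMeasure P] (hY : MemLp Y 2 P)
    (hZ : MemLp Z 2 P) (hYvar : Var[Y; P] = 1) (hZvar : Var[Z; P] = 1) : -1 ≤ cov[Y, Z; P] := by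
  have h := variance_nonneg (fun ω ↦ 1 * Y ω + 1 * Z ω) P
  rw [variance_const_mul_add_const_mul hY hZ, hYvar, hZvar] at h
  linarith

lemma covariance_le_one_of_variance_eq_one [IsFiniteMeasure P] (hY : MemLp Y 2 P)
    (hZ : MemLp Z 2 P) (hYvar : Var[Y; P] = 1) (hZvar : Var[Z; P] = 1) : cov[Y, Z; P] ≤ 1 := by
  have h := variance_nonneg (fun ω ↦ 1 * Y ω + -1 * Z ω) P
  rw [variance_const_mul_add_const_mul hY hZ, hYvar, hZvar] at h
  linarith

lemma strongDual_prodMk_apply (L : StrongDual ℝ (ℝ × ℝ)) (y z : ℝ) :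
    L (y, z) = L (1, 0) * y + L (0, 1) * z := by
  have hdecomp : ((y, z) : ℝ × ℝ) = y • (1, 0) + z • (0, 1) := by simp
  rw [hdecomp, map_add, map_smul, map_smul, smul_eq_mul, smul_eq_mul, mul_comm y, mul_comm z]

lemma charFunDual_map_prodMk_of_hasGaussianLaw (h : HasGaussianLaw (fun ω ↦ (Y ω, Z ω)) P)
    (L : StrongDual ℝ (ℝ × ℝ)) :
    charFunDual (P.map fun ω ↦ (Y ω, Z ω)) L =
      Complex.exp ((L (1, 0) * P[Y] + L (0, 1) * P[Z] : ℝ) * Complex.I -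
        (L (1, 0) ^ 2 * Var[Y; P] + 2 * (L (1, 0) * L (0, 1) * cov[Y, Z; P]) +
          L (0, 1) ^ 2 * Var[Z; P] : ℝ) / 2) := by
  have := h.isProbabilityMeasure
  rw [h.charFunDual_map_eq_fun]
  simp_rw [strongDual_prodMk_apply L (Y _)]
  rw [integral_add (h.fst.integrable.const_mul _) (h.snd.integrable.const_mul _),
    integral_const_mul, integral_const_mul,
    variance_const_mul_add_const_mul h.fst.memLp_two h.snd.memLp_two]

lemma identDistrib_prodMk_of_hasGaussianLaw (h : HasGaussianLaw (fun ω ↦ (Y ω, Z ω)) P)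
    (h' : HasGaussianLaw (fun ω ↦ (Y' ω, Z' ω)) P') (hYmean : P[Y] = P'[Y'])
    (hZmean : P[Z] = P'[Z']) (hYvar : Var[Y; P] = Var[Y'; P']) (hZvar : Var[Z; P] = Var[Z'; P'])
    (hcov : cov[Y, Z; P] = cov[Y', Z'; P']) :
    IdentDistrib (fun ω ↦ (Y ω, Z ω)) (fun ω ↦ (Y' ω, Z' ω)) P P' where
  aemeasurable_fst := h.aemeasurable
  aemeasurable_snd := h'.aemeasurable
  map_eq := by
    have := h.isGaussian_map
    have := h'.isGaussian_map
    refine Measure.ext_of_charFunDual (funext fun L ↦ ?_)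
    rw [charFunDual_map_prodMk_of_hasGaussianLaw h, charFunDual_map_prodMk_of_hasGaussianLaw h',
      hYmean, hZmean, hYvar, hZvar, hcov]

lemma hasGaussianLaw_fst_cos_mul_fst_add_sin_mul_snd (μ : Measure ℝ) [IsGaussian μ] (θ : ℝ) :
    HasGaussianLaw (fun p : ℝ × ℝ ↦ (p.1, Real.cos θ * p.1 + Real.sin θ * p.2)) (μ.prod μ) :=
  IsGaussian.hasGaussianLaw_id.map_fun ((ContinuousLinearMap.fst ℝ ℝ ℝ).prod
    (Real.cos θ • ContinuousLinearMap.fst ℝ ℝ ℝ + Real.sin θ • ContinuousLinearMap.snd ℝ ℝ ℝ))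

lemma identDistrib_prodMk_prod_gaussianReal (h : HasGaussianLaw (fun ω ↦ (Y ω, Z ω)) P)
    (hYmean : P[Y] = 0) (hZmean : P[Z] = 0) (hYvar : Var[Y; P] = 1) (hZvar : Var[Z; P] = 1)
    {θ : ℝ} (hθ : cov[Y, Z; P] = Real.cos θ) :
    IdentDistrib (fun ω ↦ (Y ω, Z ω))
      (fun p : ℝ × ℝ ↦ (p.1, Real.cos θ * p.1 + Real.sin θ * p.2)) P
      ((gaussianReal 0 1).prod (gaussianReal 0 1)) := by
  set γ := gaussianReal 0 1
  have hmodel := hasGaussianLaw_fst_cos_mul_fst_add_sin_mul_snd γ θ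
  have hfst : HasLaw Prod.fst γ (γ.prod γ) := measurePreserving_fst.hasLaw
  have hsnd : HasLaw Prod.snd γ (γ.prod γ) := measurePreserving_snd.hasLaw
  have hfst_mean : (γ.prod γ)[Prod.fst] = 0 := hfst.integral_eq.trans integral_id_gaussianReal
  have hsnd_mean : (γ.prod γ)[Prod.snd] = 0 := hsnd.integral_eq.trans integral_id_gaussianReal
  have hfst_var : Var[Prod.fst; γ.prod γ] = 1 := hfst.variance_eq.trans variance_id_gaussianReal
  have hsnd_var : Var[Prod.snd; γ.prod γ] = 1 := hsnd.variance_eq.trans variance_id_gaussianReal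
  have hfst_L2 := hfst.hasGaussianLaw.memLp_two
  have hsnd_L2 := hsnd.hasGaussianLaw.memLp_two
  have hfst_snd_cov : cov[Prod.fst, Prod.snd; γ.prod γ] = 0 :=
    covariance_fst_snd_prod IsGaussian.memLp_two_id IsGaussian.memLp_two_id
  refine identDistrib_prodMk_of_hasGaussianLaw h hmodel (hYmean.trans hfst_mean.symm) ?_
    (hYvar.trans hfst_var.symm) ?_ ?_
  · rw [integral_add (hfst_L2.integrable (by norm_num) |>.const_mul _)
      (hsnd_L2.integrable (by norm_num) |>.const_mul _), integral_const_mul, integral_const_mul,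
      hfst_mean, hsnd_mean, hZmean]
    simp
  · rw [variance_const_mul_add_const_mul hfst_L2 hsnd_L2, hfst_var, hsnd_var, hfst_snd_cov, hZvar]
    simp
  · rw [hθ]
    change _ = cov[Prod.fst, (fun p ↦ Real.cos θ * p.1) + (fun p ↦ Real.sin θ * p.2); γ.prod γ]
    rw [covariance_add_right hfst_L2 (hfst_L2.const_mul _) (hsnd_L2.const_mul _),
      covariance_const_mul_right, covariance_const_mul_right,
      covariance_self measurable_fst.aemeasurable, hfst_var, hfst_snd_cov]
    simp

lemma integral_sign_mul_sign_of_hasGaussianLaw (h : HasGaussianLaw (fun ω ↦ (Y ω, Z ω)) P)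
    (hYmean : P[Y] = 0) (hZmean : P[Z] = 0) (hYvar : Var[Y; P] = 1) (hZvar : Var[Z; P] = 1) :
    ∫ ω, Real.sign (Y ω) * Real.sign (Z ω) ∂P = 1 - 2 / π * Real.arccos cov[Y, Z; P] := by
  have := h.isProbabilityMeasure
  have hcos : cov[Y, Z; P] = Real.cos (Real.arccos cov[Y, Z; P]) :=
    (Real.cos_arccos
      (neg_one_le_covariance_of_variance_eq_one h.fst.memLp_two h.snd.memLp_two hYvar hZvar)
      (covariance_le_one_of_variance_eq_one h.fst.memLp_two h.snd.memLp_two hYvar hZvar)).symm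
  have hident := identDistrib_prodMk_prod_gaussianReal h hYmean hZmean hYvar hZvar hcos
  have hsign : Measurable fun p : ℝ × ℝ ↦ Real.sign p.1 * Real.sign p.2 := by fun_prop
  exact (hident.comp hsign).integral_eq.trans
    (integral_sign_mul_sign_prod_gaussianReal one_ne_zero (Real.arccos_nonneg _)
      (Real.arccos_le_pi _))

lemma integrable_sign_mul_sign [IsFiniteMeasure P] (hY : AEMeasurable Y P)
    (hZ : AEMeasurable Z P) : Integrable (fun ω ↦ Real.sign (Y ω) * Real.sign (Z ω)) P := by
  simp_rw [← real_sign_mul]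
  exact .of_bound (measurable_real_sign.comp_aemeasurable (hY.mul hZ)).aestronglyMeasurable 1
    (.of_forall fun ω ↦ abs_real_sign_le_one _)

end GaussianPair

section DotProduct

open Matrix

variable {κ : Type*} [Fintype κ] {μ : κ → Measure ℝ}

lemma hasGaussianLaw_dotProduct_prodMk {γ : Measure (κ → ℝ)} [IsGaussian γ] (a b : κ → ℝ) :
    HasGaussianLaw (fun z ↦ (a ⬝ᵥ z, b ⬝ᵥ z)) γ :=
  IsGaussian.hasGaussianLaw_id.map_fun
    (LinearMap.toContinuousLinearMap ((dotProductBilin ℝ ℝ a).prod (dotProductBilin ℝ ℝ b)))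

instance isGaussian_pi [∀ k, IsGaussian (μ k)] : IsGaussian (Measure.pi μ) := by
  have h : HasGaussianLaw (fun z : κ → ℝ ↦ (z ·)) (Measure.pi μ) :=
    (iIndepFun_pi fun _ ↦ aemeasurable_id).hasGaussianLaw
      fun k ↦ (measurePreserving_eval μ k).hasLaw.hasGaussianLaw
  simpa using h.isGaussian_map

lemma integral_dotProduct_pi [∀ k, IsProbabilityMeasure (μ k)] (hμ : ∀ k, Integrable id (μ k))
    (a : κ → ℝ) : ∫ z, a ⬝ᵥ z ∂Measure.pi μ = a ⬝ᵥ fun k ↦ ∫ x, x ∂μ k := by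
  simp_rw [dotProduct]
  rw [integral_finsetSum _ fun k _ ↦ (integrable_eval (hμ k)).const_mul _]
  simp_rw [integral_const_mul, integral_eval]

lemma covariance_dotProduct_pi [∀ k, IsProbabilityMeasure (μ k)] (hμ : ∀ k, MemLp id 2 (μ k))
    (a b : κ → ℝ) :
    cov[fun z ↦ a ⬝ᵥ z, fun z ↦ b ⬝ᵥ z; Measure.pi μ] = ∑ k, a k * b k * Var[id; μ k] := by
  classical
  have hL2 (k : κ) : MemLp (fun z : κ → ℝ ↦ z k) 2 (Measure.pi μ) :=
    (hμ k).comp_measurePreserving (measurePreserving_eval μ k)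
  have hcov (k l : κ) : cov[fun z ↦ z k, fun z ↦ z l; Measure.pi μ] =
      if k = l then Var[id; μ k] else 0 := by
    split_ifs with hkl
    · subst hkl
      rw [covariance_self (measurable_pi_apply k).aemeasurable]
      exact (measurePreserving_eval μ k).hasLaw.variance_eq
    · exact ((iIndepFun_pi fun _ ↦ aemeasurable_id).indepFun hkl).covariance_eq_zero (hL2 k) (hL2 l)
  simp_rw [dotProduct]
  rw [covariance_fun_sum_fun_sum (fun k ↦ (hL2 k).const_mul _) fun l ↦ (hL2 l).const_mul _]
  simp_rw [covariance_const_mul_left, covariance_const_mul_right, hcov]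
  simp [mul_assoc]

lemma integral_dotProduct_pi_gaussianReal (a : κ → ℝ) :
    ∫ z, a ⬝ᵥ z ∂Measure.pi (fun _ ↦ gaussianReal 0 1) = 0 := by
  rw [integral_dotProduct_pi fun _ ↦ IsGaussian.integrable_id]
  simp_rw [integral_id_gaussianReal, ← Pi.zero_def, dotProduct_zero]

lemma covariance_dotProduct_pi_gaussianReal (a b : κ → ℝ) :
    cov[fun z ↦ a ⬝ᵥ z, fun z ↦ b ⬝ᵥ z; Measure.pi fun _ ↦ gaussianReal 0 1] = a ⬝ᵥ b := by
  simp_rw [covariance_dotProduct_pi fun _ ↦ IsGaussian.memLp_two_id, variance_id_gaussianReal,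
    NNReal.coe_one, mul_one, dotProduct]

lemma variance_dotProduct_pi_gaussianReal (a : κ → ℝ) :
    Var[fun z ↦ a ⬝ᵥ z; Measure.pi fun _ ↦ gaussianReal 0 1] = ∑ k, a k ^ 2 := by
  rw [← covariance_self (by fun_prop), covariance_dotProduct_pi_gaussianReal]
  simp_rw [dotProduct, sq]

end DotProduct

section Rounding

/-- The Goemans–Williamson constant `α = (2 / π) min_{-1 ≤ t ≤ 1} arccos t / (1 - t) ≈ 0.87856`.
The endpoint `t = 1` is left out, since Lean's division by zero would give the ratio `0` there. -/
noncomputable def goemansWilliamsonConstant : ℝ :=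
  2 / π * sInf ((fun t : ℝ ↦ Real.arccos t / (1 - t)) '' Ico (-1) 1)

lemma arccos_div_one_sub_nonneg {t : ℝ} (ht : t ≤ 1) : 0 ≤ Real.arccos t / (1 - t) :=
  div_nonneg (Real.arccos_nonneg t) (sub_nonneg.2 ht)

lemma goemansWilliamsonConstant_nonneg : 0 ≤ goemansWilliamsonConstant :=
  mul_nonneg (by positivity) (Real.sInf_nonneg (by
    rintro _ ⟨t, ht, rfl⟩
    exact arccos_div_one_sub_nonneg ht.2.le))

lemma goemansWilliamsonConstant_mul_one_sub_le {t : ℝ} (ht : -1 ≤ t) :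
    goemansWilliamsonConstant * (1 - t) ≤ 2 / π * Real.arccos t := by
  rcases lt_or_ge t 1 with ht' | ht'
  · have hbdd : BddBelow ((fun t : ℝ ↦ Real.arccos t / (1 - t)) '' Ico (-1) 1) := by
      refine ⟨0, ?_⟩
      rintro _ ⟨s, hs, rfl⟩
      exact arccos_div_one_sub_nonneg hs.2.le
    have hinf := csInf_le hbdd (mem_image_of_mem _ ⟨ht, ht'⟩)
    rw [goemansWilliamsonConstant, mul_assoc]
    gcongr
    exact (le_div_iff₀ (sub_pos.2 ht')).1 hinf
  · rw [Real.arccos_of_one_le ht', mul_zero]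
    exact mul_nonpos_of_nonneg_of_nonpos goemansWilliamsonConstant_nonneg (sub_nonpos.2 ht')

variable {Ω : Type*} {mΩ : MeasurableSpace Ω} {P : Measure Ω}

lemma goemansWilliamsonConstant_mul_one_sub_covariance_le {Y Z : Ω → ℝ}
    (h : HasGaussianLaw (fun ω ↦ (Y ω, Z ω)) P)
    (hYmean : P[Y] = 0) (hZmean : P[Z] = 0) (hYvar : Var[Y; P] = 1) (hZvar : Var[Z; P] = 1) :
    goemansWilliamsonConstant * (1 - cov[Y, Z; P]) ≤
      ∫ ω, (1 - Real.sign (Y ω) * Real.sign (Z ω)) ∂P := by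
  have := h.isProbabilityMeasure
  calc goemansWilliamsonConstant * (1 - cov[Y, Z; P])
      ≤ 2 / π * Real.arccos cov[Y, Z; P] := goemansWilliamsonConstant_mul_one_sub_le
        (neg_one_le_covariance_of_variance_eq_one h.fst.memLp_two h.snd.memLp_two hYvar hZvar)
    _ = ∫ ω, (1 - Real.sign (Y ω) * Real.sign (Z ω)) ∂P := by
        rw [integral_sub (integrable_const 1)
            (integrable_sign_mul_sign h.fst.aemeasurable h.snd.aemeasurable),
          integral_sign_mul_sign_of_hasGaussianLaw h hYmean hZmean hYvar hZvar]
        simp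

theorem goemans_williamson_guarantee_general {ι : Type*} [Fintype ι] {w : ι → ι → ℝ}
    (hw : ∀ i j, 0 ≤ w i j) {Y : ι → Ω → ℝ}
    (hY : ∀ i j, HasGaussianLaw (fun ω ↦ (Y i ω, Y j ω)) P)
    (hmean : ∀ i, P[Y i] = 0) (hvar : ∀ i, Var[Y i; P] = 1) :
    goemansWilliamsonConstant * (1 / 2 * ∑ i, ∑ j, w i j * (1 - cov[Y i, Y j; P])) ≤
      ∫ ω, 1 / 2 * ∑ i, ∑ j, w i j * (1 - Real.sign (Y i ω) * Real.sign (Y j ω)) ∂P := by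
  have hint (i j : ι) :
      Integrable (fun ω ↦ w i j * (1 - Real.sign (Y i ω) * Real.sign (Y j ω))) P := by
    have := (hY i j).isProbabilityMeasure
    exact ((integrable_const 1).sub (integrable_sign_mul_sign (hY i j).fst.aemeasurable
      (hY i j).snd.aemeasurable)).const_mul _
  rw [integral_const_mul, mul_left_comm, integral_finsetSum _ fun i _ ↦
    integrable_finsetSum _ fun j _ ↦ hint i j]
  simp_rw [integral_finsetSum Finset.univ fun j _ ↦ hint _ j, integral_const_mul, Finset.mul_sum,
    mul_left_comm goemansWilliamsonConstant]
  gcongr with i _ j _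
  · exact hw i j
  · exact goemansWilliamsonConstant_mul_one_sub_covariance_le (hY i j) (hmean i) (hmean j)
      (hvar i) (hvar j)

end Rounding

open MeasureTheory ProbabilityTheory Matrix in
theorem goemans_williamson_guarantee {d : ℕ}
    (w : Matrix (Fin d) (Fin d) ℝ) (hw_symm : w.IsSymm) (hw_nonneg : ∀ i j, 0 ≤ w i j)
    (X : Matrix (Fin d) (Fin d) ℝ) (hX : X.PosSemidef) (hXdiag : ∀ i, X i i = 1)
    (u : Fin d → Fin d → ℝ) (hu_norm : ∀ i, ∑ k, u i k ^ 2 = 1)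
    (hgram : ∀ i j, X i j = u i ⬝ᵥ u j)
    (α : ℝ)
    (hα : α = (2 / Real.pi) * sInf ((fun t : ℝ => Real.arccos t / (1 - t)) ''
      Set.Ico (-1 : ℝ) 1)) :
    α * ((1 / 2) * ∑ i, ∑ j, w i j * (1 - X i j)) ≤
      ∫ z, ((1 / 2) * ∑ i, ∑ j,
          w i j * (1 - Real.sign (u i ⬝ᵥ z) * Real.sign (u j ⬝ᵥ z)))
        ∂(Measure.pi fun _ : Fin d => gaussianReal 0 1) := by
  rw [hα, ← goemansWilliamsonConstant]
  simpa only [covariance_dotProduct_pi_gaussianReal, ← hgram] using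
    goemans_williamson_guarantee_general hw_nonneg
      (fun i j ↦ hasGaussianLaw_dotProduct_prodMk (u i) (u j))
      (fun i ↦ integral_dotProduct_pi_gaussianReal (u i))
      (fun i ↦ (variance_dotProduct_pi_gaussianReal (u i)).trans (hu_norm i))
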